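/- Let R be a commutative F₂-algebra and q : ℤ × ℤ → R a finitely supported function. Suppose that in the Laurent polynomial ring R[s, s⁻¹, t, t⁻¹] one has Σ_{i,j} q(i,j) (s + s²t⁻¹)^j t^i = Σ_{i,j} q(i,j) (t + t²s⁻¹)^j s^i, where the sums run over the support of q and all j in the support are nonnegative. Then for all integers i, j one has q(i,j) = Σ_ℓ C(ℓ−j−1, 2ℓ−i) q(i+j−ℓ, ℓ), where C(ℓ−j−1, 2ℓ−i) is the binomial coefficient mod 2, interpreted for negative top entry via C(−m, k) ≡ C(m+k−1, k) (mod 2) for m ≥ 1, k ≥ 0, and 0 when 2ℓ−i < 0. -/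

import Mathlib

/-- The binomial coefficient `C(n, k)` (mod 2, as a natural number input to a mod-2 cast)
for integer `n` and integer `k`: it is `0` for `k < 0`, the usual `C(n,k)` for `n ≥ 0`,
and for negative top entry `n = −m` (`m ≥ 1`) it is interpreted via
`C(−m, k) ≡ C(m+k−1, k) (mod 2)`. -/
def chooseMod2 (n k : ℤ) : ℕ :=
  if k < 0 then 0
  else if 0 ≤ n then n.toNat.choose k.toNat
  else ((-n).toNat + k.toNat - 1).choose k.toNat

/-!
Substituting `s = x t` turns the left-hand summand of index `(k, l)` into
`q (k, l) * t ^ (k + l) * x ^ l * (1 + x) ^ l` and the right-hand one into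
`q (k, l) * t ^ (k + l) * x ^ (k - l) * (1 + x) ^ l`. Multiply both sides by `(1 + x) ^ (-j - 1)`
and compare the coefficients of `x ^ j * t ^ (i + j)`. On the right the binomial coefficients of
the Adem relations appear; on the left one gets `C(l - j - 1, j - l)`, which is `1` for `l = j`
and otherwise vanishes mod `2`, being zero or, up to sign, a central binomial coefficient.
-/

section AdemResidue

open HahnSeries (single single_mul_single single_pow ofPowerSeries ofPowerSeries_X)
open LaurentPolynomial
open PowerSeries (binomialSeries binomialSeries_add binomialSeries_coeff binomialSeries_nat)
open scoped LaurentSeries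

section CharTwo

variable {A : Type*} [Ring A] [Algebra (ZMod 2) A]

theorem chooseMod2_natCast_eq_choose (n : ℤ) (k : ℕ) :
    (chooseMod2 n k : A) = (Ring.choose n k : ℤ) := by
  have hk : ¬ (k : ℤ) < 0 := by lia
  rcases le_or_gt 0 n with hn | hn
  · lift n to ℕ using hn
    simp [chooseMod2, Ring.choose_natCast]
  · obtain ⟨m, rfl⟩ : ∃ m : ℕ, n = -(m + 1 : ℤ) := ⟨(-n - 1).toNat, by lia⟩
    have top_eq : (m + 1 : ℤ) + k - 1 = (m + k : ℕ) := by lia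
    have toNat_eq : (- -(m + 1 : ℤ)).toNat + (k : ℤ).toNat - 1 = m + k := by lia
    rw [chooseMod2, if_neg hk, if_neg hn.not_ge, toNat_eq, Int.toNat_natCast, Ring.choose_neg,
      top_eq, Ring.choose_natCast, Units.smul_def, smul_eq_mul, Int.cast_mul,
      Int.cast_negOnePow_natCast, ZModModule.neg_eq_self, one_pow, one_mul, Int.cast_natCast]

theorem chooseMod2_neg_sub_one_self (n : ℤ) :
    (chooseMod2 (-n - 1) n : A) = if n = 0 then 1 else 0 := by
  rcases lt_trichotomy n 0 with hn | rfl | hn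
  · simp [chooseMod2, hn, hn.ne]
  · simp [chooseMod2]
  · have choose_eq : chooseMod2 (-n - 1) n = n.toNat.centralBinom := by
      rw [chooseMod2, if_neg (by lia), if_neg (by lia), Nat.centralBinom]
      congr 1
      lia
    rw [if_neg hn.ne', choose_eq]
    obtain ⟨c, hc⟩ := Nat.two_dvd_centralBinom_of_one_le (n := n.toNat) (by lia)
    rw [hc, ← nsmul_one, mul_nsmul, ZModModule.char_nsmul_eq_zero 2, nsmul_zero]

end CharTwo

section LaurentBinomial

variable (A : Type*) [Ring A]

/-- The Laurent series `(1 + x) ^ n` for `n : ℤ`, expanded in nonnegative powers of `x`. -/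
noncomputable def laurentBinomial (n : ℤ) : A⸨X⸩ :=
  ofPowerSeries ℤ A (binomialSeries A n)

theorem laurentBinomial_add (m n : ℤ) :
    laurentBinomial A (m + n) = laurentBinomial A m * laurentBinomial A n := by
  simp only [laurentBinomial, binomialSeries_add, map_mul]

theorem laurentBinomial_natCast (n : ℕ) :
    laurentBinomial A n = (1 + single 1 1) ^ n := by
  simp only [laurentBinomial, binomialSeries_nat, map_pow, map_add, map_one, ofPowerSeries_X]

theorem coeff_laurentBinomial [Algebra (ZMod 2) A] (n k : ℤ) :
    (laurentBinomial A n).coeff k = chooseMod2 n k := by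
  rw [laurentBinomial, PowerSeries.coeff_coe]
  split_ifs with hk
  · simp [chooseMod2, hk]
  · lift k to ℕ using not_lt.1 hk
    rw [Int.natAbs_natCast, binomialSeries_coeff, chooseMod2_natCast_eq_choose, zsmul_eq_mul,
      mul_one]

end LaurentBinomial

section Dehomogenize

variable (R : Type*) [CommSemiring R]

/-- The monomial `x t` as a unit of `R[t, t⁻¹]((x))`. -/
noncomputable def xtUnit : R[T;T⁻¹]⸨X⸩ˣ where
  val := single 1 (T 1)
  inv := single (-1) (T (-1))
  val_inv := by rw [single_mul_single, ← T_add, add_neg_cancel, T_zero, HahnSeries.single_zero_one]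
  inv_val := by rw [single_mul_single, ← T_add, neg_add_cancel, T_zero, HahnSeries.single_zero_one]

theorem val_xtUnit_zpow (n : ℤ) : (xtUnit R ^ n).val = single n (T n) := by
  induction n with
  | zero => simp
  | succ n ih => rw [zpow_add_one, Units.val_mul, ih, xtUnit, single_mul_single, ← T_add]
  | pred n ih =>
    rw [zpow_sub_one, Units.val_mul, ih, xtUnit, Units.inv_mk, single_mul_single, ← T_add,
      ← sub_eq_add_neg]

/-- The substitution `s ↦ x t`, `t ↦ t`, which separates the total degree in `s` and `t`
(the exponent of `t`) from the degree in `s` (the exponent of `x`). The outer variable of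
`R[T;T⁻¹][T;T⁻¹]` is `s`, the inner one is `t`. -/
noncomputable def dehomogenize : R[T;T⁻¹][T;T⁻¹] →+* R[T;T⁻¹]⸨X⸩ :=
  eval₂ HahnSeries.C (xtUnit R)

theorem dehomogenize_C (f : R[T;T⁻¹]) : dehomogenize R (C f) = single 0 f :=
  eval₂_C _ _ f

theorem dehomogenize_T (n : ℤ) : dehomogenize R (T n) = single n (T n) := by
  rw [dehomogenize, eval₂_T, val_xtUnit_zpow]

theorem dehomogenize_s_add_sq_mul_t_inv :
    dehomogenize R (T 1 + T 2 * C (T (-1))) = single 1 (T 1) * (1 + single 1 1) := by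
  simp only [map_add, map_mul, dehomogenize_C, dehomogenize_T, single_mul_single, mul_add,
    mul_one, ← T_add]
  norm_num

theorem dehomogenize_t_add_sq_mul_s_inv :
    dehomogenize R (C (T 1) + C (T 2) * T (-1)) = single (-1) (T 1) * (1 + single 1 1) := by
  simp only [map_add, map_mul, dehomogenize_C, dehomogenize_T, single_mul_single, mul_add,
    mul_one, ← T_add]
  norm_num [add_comm]

end Dehomogenize

section Residue

variable (R : Type*) [CommRing R]

theorem dehomogenize_s_add_sq_mul_t_inv_pow (r : R) (k : ℤ) (l : ℕ) :
    dehomogenize R (C (C r) * (T 1 + T 2 * C (T (-1))) ^ l * C (T k)) =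
      single (l : ℤ) (C r * T (k + l)) * laurentBinomial _ l := by
  have monomial_eq : (single (l : ℤ) (C r * T (k + l)) : R[T;T⁻¹]⸨X⸩) =
      single 0 (C r) * single 1 (T 1) ^ l * single 0 (T k) := by
    rw [single_pow, single_mul_single, single_mul_single, T_pow, mul_one, nsmul_one, zero_add,
      add_zero, mul_assoc, ← T_add, add_comm k]
  simp only [map_mul, map_pow, dehomogenize_s_add_sq_mul_t_inv, dehomogenize_C, monomial_eq,
    laurentBinomial_natCast, mul_pow]
  ring

theorem dehomogenize_t_add_sq_mul_s_inv_pow (r : R) (k : ℤ) (l : ℕ) :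
    dehomogenize R (C (C r) * (C (T 1) + C (T 2) * T (-1)) ^ l * T k) =
      single (k - l) (C r * T (k + l)) * laurentBinomial _ l := by
  have monomial_eq : (single (k - l) (C r * T (k + l)) : R[T;T⁻¹]⸨X⸩) =
      single 0 (C r) * single (-1) (T 1) ^ l * single k (T k) := by
    rw [single_pow, single_mul_single, single_mul_single, T_pow, mul_one, smul_neg, nsmul_one,
      zero_add, neg_add_eq_sub, mul_assoc, ← T_add, add_comm k]
  simp only [map_mul, map_pow, dehomogenize_t_add_sq_mul_s_inv, dehomogenize_C, dehomogenize_T,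
    monomial_eq, laurentBinomial_natCast, mul_pow]
  ring

/-- The coefficient of `x ^ m * t ^ d` in `F(x t, t) * (1 + x) ^ n`: the residue through which
the Adem relations are read off. -/
noncomputable def ademResidue (n m d : ℤ) : R[T;T⁻¹][T;T⁻¹] →+ R where
  toFun F := ((dehomogenize R F * laurentBinomial _ n).coeff m).coeff d
  map_zero' := by simp
  map_add' F G := by simp [add_mul]

variable {R} in
theorem ademResidue_of_dehomogenize_eq [Algebra (ZMod 2) R] {F : R[T;T⁻¹][T;T⁻¹]} {a b l : ℤ}
    {r : R} (hF : dehomogenize R F = single a (C r * T b) * laurentBinomial _ l) (n m d : ℤ) :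
    ademResidue R n m d F = if b = d then (chooseMod2 (l + n) (m - a) : R) * r else 0 := by
  change ((dehomogenize R F * laurentBinomial _ n).coeff m).coeff d = _
  rw [hF, mul_assoc, ← laurentBinomial_add, HahnSeries.coeff_single_mul, coeff_laurentBinomial,
    ← single_eq_C_mul_T, mul_comm, ← nsmul_eq_mul, AddMonoidAlgebra.coeff_smul]
  simp only [AddMonoidAlgebra.coeff_single, Finsupp.smul_apply, Finsupp.single_apply, smul_ite,
    nsmul_eq_mul, mul_zero]

theorem ademResidue_s_add_sq_mul_t_inv_pow [Algebra (ZMod 2) R] (r : R) (i j k : ℤ) (l : ℕ) :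
    ademResidue R (-j - 1) j (i + j) (C (C r) * (T 1 + T 2 * C (T (-1))) ^ l * C (T k)) =
      if (k, (l : ℤ)) = (i, j) then r else 0 := by
  rw [ademResidue_of_dehomogenize_eq (dehomogenize_s_add_sq_mul_t_inv_pow R r k l),
    show (l : ℤ) + (-j - 1) = -(j - l) - 1 by ring, chooseMod2_neg_sub_one_self]
  simp only [ite_mul, one_mul, zero_mul, ← ite_and, Prod.mk.injEq]
  exact if_congr (by lia) rfl rfl

theorem ademResidue_t_add_sq_mul_s_inv_pow [Algebra (ZMod 2) R] (r : R) (i j k : ℤ) (l : ℕ) :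
    ademResidue R (-j - 1) j (i + j) (C (C r) * (C (T 1) + C (T 2) * T (-1)) ^ l * T k) =
      if k = i + j - l then (chooseMod2 (l - j - 1) (2 * l - i) : R) * r else 0 := by
  rw [ademResidue_of_dehomogenize_eq (dehomogenize_t_add_sq_mul_s_inv_pow R r k l)]
  simp only [← eq_sub_iff_add_eq]
  split_ifs with hk
  · congr 3 <;> lia
  · rfl

end Residue

end AdemResidue

open LaurentPolynomial in
/-- The algebraic Adem relations: if a finitely supported `q : ℤ × ℤ → R` over a
commutative `𝔽₂`-algebra `R` (with all second indices in the support nonnegative)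
satisfies `Σ q(i,j) (s+s²t⁻¹)^j t^i = Σ q(i,j) (t+t²s⁻¹)^j s^i` in `R[s,s⁻¹,t,t⁻¹]`,
then `q(i,j) = Σ_ℓ C(ℓ−j−1, 2ℓ−i) q(i+j−ℓ, ℓ)` for all integers `i, j`. -/
theorem stmt_7 (R : Type*) [CommRing R] [Algebra (ZMod 2) R] (q : ℤ × ℤ →₀ R)
    (hsupp : ∀ p ∈ q.support, 0 ≤ p.2)
    (hsym : ∑ p ∈ q.support,
        (C (C (q p)) * (T 1 + T 2 * C (T (-1))) ^ p.2.toNat * C (T p.1) :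
          LaurentPolynomial (LaurentPolynomial R)) =
      ∑ p ∈ q.support,
        (C (C (q p)) * (C (T 1) + C (T 2) * T (-1)) ^ p.2.toNat * T p.1 :
          LaurentPolynomial (LaurentPolynomial R))) :
    ∀ i j : ℤ, q (i, j) =
      ∑ p ∈ q.support,
        if p.1 = i + j - p.2 then (chooseMod2 (p.2 - j - 1) (2 * p.2 - i) : R) * q p
        else 0 := by
  intro i j
  have residue_eq := congrArg (ademResidue R (-j - 1) j (i + j)) hsym
  rw [map_sum, map_sum] at residue_eq
  have toNat_eq {p : ℤ × ℤ} (hp : p ∈ q.support) : (p.2.toNat : ℤ) = p.2 :=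
    Int.toNat_of_nonneg (hsupp p hp)
  calc q (i, j) = ∑ p ∈ q.support, if p = (i, j) then q p else 0 :=
        (q.sum_ite_self_eq' (i, j)).symm
    _ = ∑ p ∈ q.support, ademResidue R (-j - 1) j (i + j)
          (C (C (q p)) * (T 1 + T 2 * C (T (-1))) ^ p.2.toNat * C (T p.1)) :=
        Finset.sum_congr rfl fun p hp => by rw [ademResidue_s_add_sq_mul_t_inv_pow, toNat_eq hp]
    _ = ∑ p ∈ q.support, ademResidue R (-j - 1) j (i + j)
          (C (C (q p)) * (C (T 1) + C (T 2) * T (-1)) ^ p.2.toNat * T p.1) := residue_eq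
    _ = _ :=
        Finset.sum_congr rfl fun p hp => by rw [ademResidue_t_add_sq_mul_s_inv_pow, toNat_eq hp]
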